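/- Let p be a prime ≥ 5 and α, β, γ positive integers with w = α+β+γ odd and p > w. Then, modulo p, Z_p(α,β,γ) ≡ ( ∑_{j=1}^{max(α,β)} ((-1)^{α+β-j}/w) (C(α+β-j-1, α-1) + C(α+β-j-1, β-1)) C(w, j) + 2(-1)^γ C(α+β, α) δ_{p-1, w} ) · B_{p-w}, where δ is the Kronecker delta, B denotes Bernoulli numbers, and Z_p(α,β,γ) := ∑_{k1+k2+k3=p, p∤k1k2k3} 1/(k1^α k2^β k3^γ) is interpreted in ℤ/pℤ. -/

import Mathlib

/-! Put `n = k₁ + k₂`. Then `k₃ = p - n ≡ -n`, so the sum over `k₁ + k₂ + k₃ = p` is `(-1) ^ γ`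
times the truncated Tornheim sum `∑ 1 / (k ^ α * (n - k) ^ β * n ^ γ)` over `0 < k < n < p`. Partial
fractions in `1 / k` and `1 / (n - k)` turn it into a combination of double harmonic sums
`∑ 1 / (a ^ j * n ^ (w - j))`. By Fermat's little theorem the inverse powers are positive powers;
Faulhaber's formula evaluates the inner sum, and as `∑ n ^ m` vanishes modulo `p` unless
`p - 1 ∣ m`, a single term survives: a multiple of the Bernoulli number `B_{p-w}`. For odd `w` the
Kronecker delta is zero, because `p - 1` is even. -/

section Residues

open scoped Nat

/-- `HasResidue q x` says that the rational number `q` is integral at the characteristic of `K` and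
reduces to `x` there. The condition on the denominator is what makes the junk-valued cast
`ℚ → K` compatible with the ring operations. -/
structure HasResidue {K : Type*} [DivisionRing K] (q : ℚ) (x : K) : Prop where
  den_ne_zero : (q.den : K) ≠ 0
  cast_eq : (q : K) = x

namespace HasResidue

variable {K : Type*} [DivisionRing K] {q r : ℚ} {x y : K}

theorem ratCast (hq : HasResidue q x) : HasResidue q (q : K) :=
  ⟨hq.den_ne_zero, rfl⟩

theorem natCast (n : ℕ) : HasResidue (n : ℚ) (n : K) :=
  ⟨by simp, by simp⟩

theorem add (hq : HasResidue q x) (hr : HasResidue r y) : HasResidue (q + r) (x + y) where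
  den_ne_zero := ne_zero_of_dvd_ne_zero
    (by simpa using ⟨hq.den_ne_zero, hr.den_ne_zero⟩) (Nat.cast_dvd_cast (Rat.add_den_dvd q r))
  cast_eq := by
    rw [Rat.cast_add_of_ne_zero hq.den_ne_zero hr.den_ne_zero, hq.cast_eq, hr.cast_eq]

theorem neg (hq : HasResidue q x) : HasResidue (-q) (-x) :=
  ⟨hq.den_ne_zero, by rw [Rat.cast_neg, hq.cast_eq]⟩

theorem mul (hq : HasResidue q x) (hr : HasResidue r y) : HasResidue (q * r) (x * y) where
  den_ne_zero := ne_zero_of_dvd_ne_zero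
    (by simpa using ⟨hq.den_ne_zero, hr.den_ne_zero⟩) (Nat.cast_dvd_cast (Rat.mul_den_dvd q r))
  cast_eq := by
    rw [Rat.cast_mul_of_ne_zero hq.den_ne_zero hr.den_ne_zero, hq.cast_eq, hr.cast_eq]

theorem pow (hq : HasResidue q x) (n : ℕ) : HasResidue (q ^ n) (x ^ n) := by
  induction n with
  | zero => simpa using natCast (K := K) 1
  | succ n ih => simpa only [pow_succ] using ih.mul hq

theorem div_natCast (hq : HasResidue q x) {n : ℕ} (hn : (n : K) ≠ 0) :
    HasResidue (q / n) (x / n) := by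
  have hn' : 0 < n := Nat.pos_of_ne_zero fun h => hn (by simp [h])
  have inv_natCast : HasResidue (n : ℚ)⁻¹ (n : K)⁻¹ :=
    ⟨by rwa [Rat.inv_natCast_den_of_pos hn'],
      by rw [Rat.cast_inv_of_ne_zero (by simpa using hn), Rat.cast_natCast]⟩
  simpa only [div_eq_mul_inv] using hq.mul inv_natCast

theorem sum {ι : Type*} {s : Finset ι} {f : ι → ℚ} {g : ι → K}
    (h : ∀ i ∈ s, HasResidue (f i) (g i)) : HasResidue (∑ i ∈ s, f i) (∑ i ∈ s, g i) := by
  induction s using Finset.cons_induction with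
  | empty => simpa using natCast (K := K) 0
  | cons a s ha ih =>
    rw [Finset.forall_mem_cons] at h
    simpa only [Finset.sum_cons] using h.1.add (ih h.2)

end HasResidue

section Bernoulli

variable {K : Type*} [DivisionRing K] {n : ℕ}

theorem natCast_ne_zero_of_factorial_ne_zero (hn : (n ! : K) ≠ 0) {k : ℕ} (hk : 0 < k)
    (hkn : k ≤ n) : (k : K) ≠ 0 :=
  ne_zero_of_dvd_ne_zero hn (Nat.cast_dvd_cast (Nat.dvd_factorial hk hkn))

theorem hasResidue_bernoulli' (hn : ((n + 1)! : K) ≠ 0) :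
    HasResidue (bernoulli' n) (bernoulli' n : K) := by
  induction n using Nat.strong_induction_on with
  | _ n ih =>
    have summand : ∀ k ∈ Finset.range n,
        HasResidue ((n.choose k : ℚ) / ((n - k + 1 : ℕ) : ℚ) * bernoulli' k)
          ((n.choose k : K) / ((n - k + 1 : ℕ) : K) * (bernoulli' k : K)) := fun k hk => by
      have hk := Finset.mem_range.1 hk
      have hfac : ((k + 1)! : K) ≠ 0 :=
        ne_zero_of_dvd_ne_zero hn (Nat.cast_dvd_cast (Nat.factorial_dvd_factorial (by omega)))
      exact ((HasResidue.natCast _).div_natCast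
        (natCast_ne_zero_of_factorial_ne_zero hn (by omega) (by omega))).mul (ih k hk hfac)
    have recursion : bernoulli' n = ((1 : ℕ) : ℚ) +
        -∑ k ∈ Finset.range n, (n.choose k : ℚ) / ((n - k + 1 : ℕ) : ℚ) * bernoulli' k := by
      rw [bernoulli'_def, Nat.cast_one, sub_eq_add_neg]
      refine congrArg (1 + -·) (Finset.sum_congr rfl fun k hk => ?_)
      rw [Nat.cast_add_one, Nat.cast_sub (Finset.mem_range.1 hk).le]
    have h := (HasResidue.natCast (K := K) 1).add (HasResidue.sum summand).neg
    exact (recursion ▸ h).ratCast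

theorem hasResidue_bernoulli (hn : ((n + 1)! : K) ≠ 0) :
    HasResidue (bernoulli n) (bernoulli n : K) := by
  have h := ((HasResidue.natCast (K := K) 1).neg.pow n).mul (hasResidue_bernoulli' hn)
  rw [Nat.cast_one] at h
  exact h.ratCast

end Bernoulli

theorem sum_range_pow_of_factorial_ne_zero {K : Type*} [Field K] {m : ℕ}
    (hm : ((m + 1)! : K) ≠ 0) (n : ℕ) :
    ∑ k ∈ Finset.range n, (k : K) ^ m =
      ∑ i ∈ Finset.range (m + 1),
        (bernoulli i : K) * (m + 1).choose i * (n : K) ^ (m + 1 - i) / ((m + 1 : ℕ) : K) := by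
  have lhs : HasResidue (∑ k ∈ Finset.range n, (k : ℚ) ^ m) (∑ k ∈ Finset.range n, (k : K) ^ m) :=
    HasResidue.sum fun k _ => (HasResidue.natCast k).pow m
  have rhs : HasResidue (∑ k ∈ Finset.range n, (k : ℚ) ^ m) (∑ i ∈ Finset.range (m + 1),
      (bernoulli i : K) * (m + 1).choose i * (n : K) ^ (m + 1 - i) / ((m + 1 : ℕ) : K)) := by
    rw [sum_range_pow, ← Nat.cast_add_one]
    refine HasResidue.sum fun i hi => ?_
    have hfac : ((i + 1)! : K) ≠ 0 := ne_zero_of_dvd_ne_zero hm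
      (Nat.cast_dvd_cast (Nat.factorial_dvd_factorial (Finset.mem_range.1 hi)))
    have hden := natCast_ne_zero_of_factorial_ne_zero hm m.succ_pos le_rfl
    exact (((hasResidue_bernoulli hfac).mul (.natCast _)).mul
      ((HasResidue.natCast n).pow _)).div_natCast hden
  exact lhs.cast_eq.symm.trans rhs.cast_eq

end Residues

section FiniteField

theorem sum_pow_eq_ite_card_sub_one_dvd {K : Type*} [Field K] [Fintype K] {m : ℕ} (hm : m ≠ 0) :
    ∑ x : K, x ^ m = if Fintype.card K - 1 ∣ m then -1 else 0 := by
  classical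
  rw [← FiniteField.sum_pow_units, Fintype.sum_eq_add_sum_subtype_ne _ (0 : K), zero_pow hm,
    zero_add]
  exact (Fintype.sum_equiv unitsEquivNeZero _ _ fun _ => rfl).symm

theorem inv_pow_eq_pow_card_sub_one_sub {K : Type*} [Field K] [Fintype K] (x : K) {l : ℕ}
    (hl : l ≠ 0) (hl' : l < Fintype.card K - 1) : (x ^ l)⁻¹ = x ^ (Fintype.card K - 1 - l) := by
  rcases eq_or_ne x 0 with rfl | hx
  · rw [zero_pow hl, inv_zero, zero_pow (by omega)]
  · refine inv_eq_of_mul_eq_one_right ?_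
    rw [← pow_add, Nat.add_sub_cancel' hl'.le, FiniteField.pow_card_sub_one_eq_one x hx]

theorem sum_range_natCast_zmod {M : Type*} [AddCommMonoid M] {n : ℕ} [NeZero n] (f : ZMod n → M) :
    ∑ k ∈ Finset.range n, f k = ∑ x : ZMod n, f x :=
  Finset.sum_nbij' (↑) ZMod.val (by simp) (by simp [ZMod.val_lt])
    (fun _ hk => ZMod.val_cast_of_lt (Finset.mem_range.1 hk)) (by simp) (by simp)

theorem sum_range_pow_zmod {p : ℕ} [Fact p.Prime] {m : ℕ} (hm : m ≠ 0) (hm' : m < 2 * (p - 1)) :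
    ∑ n ∈ Finset.range p, (n : ZMod p) ^ m = if m = p - 1 then -1 else 0 := by
  rw [sum_range_natCast_zmod (· ^ m), sum_pow_eq_ite_card_sub_one_dvd hm, ZMod.card]
  congr 1
  refine propext ⟨fun ⟨c, hc⟩ => ?_, fun h => h ▸ dvd_rfl⟩
  have : c = 1 := by
    have : c < 2 := by nlinarith
    interval_cases c <;> omega
  simpa [this] using hc

end FiniteField

section BinomialCoefficients

theorem factorial_ne_zero_of_lt_char {R : Type*} [Ring R] [Nontrivial R] (p : ℕ) [Fact p.Prime]
    [CharP R p] {n : ℕ} (hn : n < p) : (n.factorial : R) ≠ 0 :=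
  ((IsUnit.natCast_factorial_iff_of_charP p).2 hn).ne_zero

theorem natCast_choose_char_sub {K : Type*} [Field K] {p : ℕ} [Fact p.Prime] [CharP K p] {j l : ℕ}
    (hj : j ≤ p) (hl : l < p) : ((p - j).choose l : K) = (-1) ^ l * j.multichoose l := by
  have hp : ((p - j : ℕ) : K) = -j := by rw [Nat.cast_sub hj, CharP.cast_eq_zero, zero_sub]
  have h : (j.ascFactorial l : K) = (-1) ^ l * (p - j).descFactorial l := by
    rw [← ascPochhammer_nat_eq_natCast_ascFactorial, ← descPochhammer_eval_eq_descFactorial, hp,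
      ← ascPochhammer_eval_neg_eq_descPochhammer, neg_neg]
  rw [Nat.ascFactorial_eq_factorial_mul_choose', Nat.descFactorial_eq_factorial_mul_choose,
    ← Nat.multichoose_eq] at h
  push_cast at h
  have hsq : (-1 : K) ^ l * (-1) ^ l = 1 := pow_mul_pow_eq_one l (by simp)
  refine mul_left_cancel₀ (factorial_ne_zero_of_lt_char p hl) ?_
  linear_combination (-(-1) ^ l) * h - (l.factorial * (p - j).choose l : K) * hsq

theorem mul_add_choose_eq_mul_multichoose (j l : ℕ) :
    j * (j + l).choose j = (j + l) * j.multichoose l := by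
  rcases j with _ | i
  · cases l <;> simp
  · rw [Nat.multichoose_eq, show i + 1 + l = i + l + 1 by omega, Nat.add_sub_cancel,
      mul_comm (i + 1), ← Nat.add_one_mul_choose_eq, Nat.choose_symm_add]

end BinomialCoefficients

section DoubleHarmonicSum

theorem sum_range_pow_mul_sum_range_pow_zmod {p : ℕ} [Fact p.Prime] {r s : ℕ} (hr : r + 1 < p)
    (hs : s + 1 < p) (hrs : p ≤ r + s + 2) :
    ∑ n ∈ Finset.range p, (n : ZMod p) ^ s * ∑ a ∈ Finset.range n, (a : ZMod p) ^ r =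
      -((bernoulli (r + s + 2 - p) : ZMod p) * (r + 1).choose (r + s + 2 - p)) /
        ((r + 1 : ℕ) : ZMod p) := by
  set c : ℕ → ZMod p := fun i =>
    (bernoulli i : ZMod p) * (r + 1).choose i / ((r + 1 : ℕ) : ZMod p) with hc
  calc ∑ n ∈ Finset.range p, (n : ZMod p) ^ s * ∑ a ∈ Finset.range n, (a : ZMod p) ^ r
      = ∑ n ∈ Finset.range p,
          ∑ i ∈ Finset.range (r + 1), c i * (n : ZMod p) ^ (s + (r + 1 - i)) := by
        refine Finset.sum_congr rfl fun n _ => ?_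
        rw [sum_range_pow_of_factorial_ne_zero (factorial_ne_zero_of_lt_char p hr), Finset.mul_sum]
        exact Finset.sum_congr rfl fun i _ => by ring
    _ = ∑ i ∈ Finset.range (r + 1), if i = r + s + 2 - p then -c i else 0 := by
        rw [Finset.sum_comm]
        refine Finset.sum_congr rfl fun i hi => ?_
        have hi := Finset.mem_range.1 hi
        rw [← Finset.mul_sum, sum_range_pow_zmod (by omega) (by omega), mul_ite, mul_neg_one,
          mul_zero]
        exact if_congr (by omega) rfl rfl
    _ = _ := by
        rw [Finset.sum_ite_eq' _ _ (fun i => -c i), if_pos (Finset.mem_range.2 (by omega)), hc,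
          neg_div]

/-- The double harmonic sum `∑_{0 < a < n < N} a⁻ʲ n⁻ˡ` in a field `K`. -/
def doubleHarmonicSum (K : Type*) [Field K] (N j l : ℕ) : K :=
  ∑ n ∈ Finset.range N, ∑ a ∈ Finset.Ico 1 n, ((a : K) ^ j)⁻¹ * ((n : K) ^ l)⁻¹

theorem doubleHarmonicSum_zmod_eq_sum_pow {p j l : ℕ} [Fact p.Prime] (hj : j ≠ 0) (hl : l ≠ 0)
    (h : j + l < p) :
    doubleHarmonicSum (ZMod p) p j l =
      ∑ n ∈ Finset.range p,
        (n : ZMod p) ^ (p - 1 - l) * ∑ a ∈ Finset.range n, (a : ZMod p) ^ (p - 1 - j) := by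
  refine Finset.sum_congr rfl fun n _ => ?_
  have inv_pow_eq {e : ℕ} (he : e ≠ 0) (he' : e < p - 1) (x : ZMod p) :
      (x ^ e)⁻¹ = x ^ (p - 1 - e) := by
    simpa only [ZMod.card] using inv_pow_eq_pow_card_sub_one_sub x he (by rwa [ZMod.card])
  simp only [inv_pow_eq hj (by omega), inv_pow_eq hl (by omega)]
  rw [← Finset.sum_mul, mul_comm]
  congr 1
  rw [Finset.range_eq_Ico]
  refine Finset.sum_subset (Finset.Ico_subset_Ico_left zero_le_one) fun a ha ha' => ?_
  obtain rfl : a = 0 := by grind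
  rw [Nat.cast_zero, zero_pow (by omega)]

theorem doubleHarmonicSum_zmod_eq_bernoulli {p j l : ℕ} [Fact p.Prime] (hj : j ≠ 0) (hl : l ≠ 0)
    (h : j + l < p) :
    doubleHarmonicSum (ZMod p) p j l =
      (-1) ^ l * (j + l).choose j / ((j + l : ℕ) : ZMod p) *
        (bernoulli (p - (j + l)) : ZMod p) := by
  have hchoose : ((p - j).choose (p - (j + l)) : ZMod p) = (-1) ^ l * j.multichoose l := by
    rw [← natCast_choose_char_sub (by omega) (by omega),
      Nat.choose_symm_of_eq_add (by omega : p - j = p - (j + l) + l)]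
  have hmultichoose : (j : ZMod p) * (j + l).choose j = ((j + l : ℕ) : ZMod p) * j.multichoose l :=
    mod_cast congrArg Nat.cast (mul_add_choose_eq_mul_multichoose j l)
  have natCast_ne_zero {k : ℕ} (hk : 0 < k) (hkp : k < p) : (k : ZMod p) ≠ 0 :=
    natCast_ne_zero_of_factorial_ne_zero (factorial_ne_zero_of_lt_char p hkp) hk le_rfl
  have hj0 := natCast_ne_zero (k := j) (by omega) (by omega)
  have hw0 := natCast_ne_zero (k := j + l) (by omega) h
  rw [doubleHarmonicSum_zmod_eq_sum_pow hj hl h,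
    sum_range_pow_mul_sum_range_pow_zmod (by omega) (by omega) (by omega),
    show p - 1 - j + (p - 1 - l) + 2 - p = p - (j + l) by omega,
    show p - 1 - j + 1 = p - j by omega, hchoose, Nat.cast_sub (by omega : j ≤ p),
    ZMod.natCast_self, zero_sub]
  field_simp
  linear_combination (-(bernoulli (p - (j + l)) : ZMod p)) * hmultichoose

end DoubleHarmonicSum

section PartialFraction

/-- The part with poles along `X⁻¹ = 0` in the partial fraction expansion of `X ^ α * Y ^ β`, for
`X⁻¹ + Y⁻¹ = Z⁻¹`. The term of `X`-degree `j` is indexed by `i = α - j`. -/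
def partialFractionPart {R : Type*} [CommSemiring R] (X Z : R) (α β : ℕ) : R :=
  ∑ i ∈ Finset.range α, (β.multichoose i : R) * (X ^ (α - i) * Z ^ (β + i))

variable {R : Type*} [CommSemiring R]

theorem partialFractionPart_zero_left (X Z : R) (β : ℕ) : partialFractionPart X Z 0 β = 0 := by
  simp [partialFractionPart]

theorem partialFractionPart_succ_zero (X Z : R) (α : ℕ) :
    partialFractionPart X Z (α + 1) 0 = X ^ (α + 1) := by
  simp [partialFractionPart, Finset.sum_range_succ']

theorem partialFractionPart_succ_succ (X Z : R) (α β : ℕ) :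
    partialFractionPart X Z (α + 1) (β + 1) =
      Z * (partialFractionPart X Z (α + 1) β + partialFractionPart X Z α (β + 1)) := by
  simp only [partialFractionPart, Finset.sum_range_succ' _ α, Nat.multichoose_succ_succ,
    Nat.multichoose_zero_right, Nat.add_sub_add_right, Nat.cast_add, add_mul,
    Finset.sum_add_distrib, mul_add, Finset.mul_sum]
  rw [add_right_comm]
  refine congrArg₂ (· + ·) (congrArg₂ (· + ·) ?_ ?_) ?_
  · exact Finset.sum_congr rfl fun i _ => by ring
  · rw [Nat.sub_zero]
    ring
  · exact Finset.sum_congr rfl fun i _ => by ring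

theorem pow_mul_pow_eq_partialFractionPart_add {X Y Z : R} (h : X * Y = (X + Y) * Z) :
    ∀ {α β : ℕ}, α + β ≠ 0 →
      X ^ α * Y ^ β = partialFractionPart X Z α β + partialFractionPart Y Z β α
  | α + 1, 0, _ => by simp [partialFractionPart_succ_zero, partialFractionPart_zero_left]
  | 0, β + 1, _ => by simp [partialFractionPart_succ_zero, partialFractionPart_zero_left]
  | α + 1, β + 1, _ => calc
      X ^ (α + 1) * Y ^ (β + 1) = X ^ α * Y ^ β * (X * Y) := by ring
      _ = Z * (X ^ (α + 1) * Y ^ β + X ^ α * Y ^ (β + 1)) := by rw [h]; ring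
      _ = _ := by
        rw [pow_mul_pow_eq_partialFractionPart_add h (by omega : α + 1 + β ≠ 0),
          pow_mul_pow_eq_partialFractionPart_add h (by omega : α + (β + 1) ≠ 0),
          partialFractionPart_succ_succ, partialFractionPart_succ_succ]
        ring

theorem inv_pow_mul_pow_eq_partialFractionPart_add {K : Type*} [Field K] {x y : K} (hx : x ≠ 0)
    (hy : y ≠ 0) (hxy : x + y ≠ 0) {α β : ℕ} (h : α + β ≠ 0) :
    (x ^ α * y ^ β)⁻¹ =
      partialFractionPart x⁻¹ (x + y)⁻¹ α β + partialFractionPart y⁻¹ (x + y)⁻¹ β α := by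
  rw [← pow_mul_pow_eq_partialFractionPart_add _ h, inv_pow, inv_pow, mul_inv]
  field_simp
  ring

theorem sum_multichoose_mul_eq_sum_Icc_choose_mul (f : ℕ → R) {α β N : ℕ} (hβ : 0 < β)
    (hN : α ≤ N) (hN' : N < α + β) :
    ∑ i ∈ Finset.range α, (β.multichoose i : R) * f (α - i) =
      ∑ j ∈ Finset.Icc 1 N, ((α + β - j - 1).choose (β - 1) : R) * f j := by
  rw [← Finset.sum_subset (Finset.Icc_subset_Icc_right hN)]
  · refine Finset.sum_nbij' (α - ·) (α - ·) (by grind) (by grind) (by grind) (by grind)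
      fun i hi => ?_
    have hi := Finset.mem_range.1 hi
    rw [Nat.multichoose_eq, Nat.choose_symm_of_eq_add (by omega : β + i - 1 = i + (β - 1)),
      show α + β - (α - i) - 1 = β + i - 1 by omega]
  · intro j hj hj'
    rw [Finset.mem_Icc] at hj hj'
    rw [Nat.choose_eq_zero_of_lt (by omega), Nat.cast_zero, zero_mul]

end PartialFraction

section TornheimSum

variable {K : Type*} [Field K]

theorem sum_partialFractionPart_inv (N α β γ : ℕ) :
    ∑ n ∈ Finset.range N, ∑ k ∈ Finset.Ico 1 n,
        partialFractionPart (k : K)⁻¹ (n : K)⁻¹ α β * ((n : K) ^ γ)⁻¹ =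
      ∑ i ∈ Finset.range α, (β.multichoose i : K) * doubleHarmonicSum K N (α - i) (β + i + γ) := by
  simp only [partialFractionPart, doubleHarmonicSum, Finset.mul_sum, Finset.sum_mul]
  rw [Finset.sum_comm (s := Finset.range α)]
  refine Finset.sum_congr rfl fun n _ => ?_
  rw [Finset.sum_comm]
  refine Finset.sum_congr rfl fun i _ => Finset.sum_congr rfl fun k _ => ?_
  rw [inv_pow, inv_pow, pow_add _ (β + i) γ, mul_inv]
  ring

theorem sum_inv_pow_mul_sub_pow_mul_pow {N : ℕ} (hN : ((N - 1).factorial : K) ≠ 0) {α β : ℕ}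
    (h : α + β ≠ 0) (γ : ℕ) :
    ∑ n ∈ Finset.range N, ∑ k ∈ Finset.Ico 1 n,
        ((k : K) ^ α * ((n - k : ℕ) : K) ^ β * (n : K) ^ γ)⁻¹ =
      ∑ i ∈ Finset.range α, (β.multichoose i : K) * doubleHarmonicSum K N (α - i) (β + i + γ) +
        ∑ i ∈ Finset.range β,
          (α.multichoose i : K) * doubleHarmonicSum K N (β - i) (α + i + γ) := by
  rw [← sum_partialFractionPart_inv, ← sum_partialFractionPart_inv, ← Finset.sum_add_distrib]
  refine Finset.sum_congr rfl fun n hn => ?_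
  have hn := Finset.mem_range.1 hn
  have reflect := Finset.sum_Ico_reflect
    (fun k => partialFractionPart (k : K)⁻¹ (n : K)⁻¹ β α * ((n : K) ^ γ)⁻¹) 1 n.le_succ
  simp only [Nat.add_sub_cancel_left, Nat.add_sub_cancel] at reflect
  rw [← reflect, ← Finset.sum_add_distrib]
  refine Finset.sum_congr rfl fun k hk => ?_
  have hk := Finset.mem_Ico.1 hk
  have ne_zero {m : ℕ} (hm : 0 < m) (hmN : m < N) : (m : K) ≠ 0 :=
    natCast_ne_zero_of_factorial_ne_zero hN hm (by omega)
  have hsum : (k : K) + (n - k : ℕ) = n := by rw [← Nat.cast_add, Nat.add_sub_cancel' hk.2.le]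
  rw [mul_inv, inv_pow_mul_pow_eq_partialFractionPart_add (ne_zero (by omega) (by omega))
    (ne_zero (by omega) (by omega)) (hsum ▸ ne_zero (by omega) hn) h, hsum, add_mul]

theorem sum_inv_pow_mul_sub_pow_mul_pow_eq_sum_choose {N : ℕ} (hN : ((N - 1).factorial : K) ≠ 0)
    {α β : ℕ} (hα : 0 < α) (hβ : 0 < β) (γ : ℕ) :
    ∑ n ∈ Finset.range N, ∑ k ∈ Finset.Ico 1 n,
        ((k : K) ^ α * ((n - k : ℕ) : K) ^ β * (n : K) ^ γ)⁻¹ =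
      ∑ j ∈ Finset.Icc 1 (max α β),
        (((α + β - j - 1).choose (α - 1) : K) + (α + β - j - 1).choose (β - 1)) *
          doubleHarmonicSum K N j (α + β + γ - j) := by
  have half {a b : ℕ} (hb : 0 < b) (ha : 0 < a) :
      ∑ i ∈ Finset.range a, (b.multichoose i : K) * doubleHarmonicSum K N (a - i) (b + i + γ) =
        ∑ j ∈ Finset.Icc 1 (max a b),
          ((a + b - j - 1).choose (b - 1) : K) * doubleHarmonicSum K N j (a + b + γ - j) := by
    rw [← sum_multichoose_mul_eq_sum_Icc_choose_mul _ hb (by omega) (by omega)]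
    refine Finset.sum_congr rfl fun i hi => ?_
    have hi := Finset.mem_range.1 hi
    rw [show a + b + γ - (a - i) = b + i + γ by omega]
  rw [sum_inv_pow_mul_sub_pow_mul_pow hN (by omega), half hβ hα, half hα hβ, max_comm β α,
    add_comm β α, ← Finset.sum_add_distrib]
  exact Finset.sum_congr rfl fun j _ => by ring

end TornheimSum

section SumsOverThreeParts

variable {p : ℕ}

theorem sum_filter_add_add_eq {M : Type*} [AddCommMonoid M] (f : ℕ × ℕ × ℕ → M) :
    ∑ k ∈ (Finset.range (p + 1) ×ˢ Finset.range (p + 1) ×ˢ Finset.range (p + 1)).filter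
        (fun k : ℕ × ℕ × ℕ => k.1 + k.2.1 + k.2.2 = p ∧
          0 < k.1 ∧ ¬ p ∣ k.1 ∧ 0 < k.2.1 ∧ ¬ p ∣ k.2.1 ∧ 0 < k.2.2 ∧ ¬ p ∣ k.2.2), f k =
      ∑ n ∈ Finset.range p, ∑ k ∈ Finset.Ico 1 n, f (k, n - k, p - n) := by
  have not_dvd {m : ℕ} (hm : 0 < m) (hmp : m < p) : ¬ p ∣ m := Nat.not_dvd_of_pos_of_lt hm hmp
  rw [Finset.sum_sigma']
  refine Finset.sum_nbij' (fun k => ⟨k.1 + k.2.1, k.1⟩) (fun x => (x.2, x.1 - x.2, p - x.1))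
    ?_ ?_ ?_ ?_ ?_ <;> grind

variable [Fact p.Prime]

theorem sum_inv_pow_mul_pow_mul_char_sub_pow (α β γ : ℕ) :
    ∑ n ∈ Finset.range p, ∑ k ∈ Finset.Ico 1 n,
        ((k : ZMod p) ^ α * ((n - k : ℕ) : ZMod p) ^ β * ((p - n : ℕ) : ZMod p) ^ γ)⁻¹ =
      (-1) ^ γ * ∑ n ∈ Finset.range p, ∑ k ∈ Finset.Ico 1 n,
        ((k : ZMod p) ^ α * ((n - k : ℕ) : ZMod p) ^ β * (n : ZMod p) ^ γ)⁻¹ := by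
  simp only [Finset.mul_sum]
  refine Finset.sum_congr rfl fun n hn => Finset.sum_congr rfl fun k _ => ?_
  rw [Nat.cast_sub (Finset.mem_range.1 hn).le, ZMod.natCast_self, zero_sub, neg_pow,
    mul_left_comm, mul_inv, ← inv_pow, inv_neg_one]

theorem sum_inv_pow_mul_pow_mul_pow_zmod {α β γ : ℕ} (hα : 0 < α) (hβ : 0 < β)
    (hw : α + β + γ < p) :
    ∑ n ∈ Finset.range p, ∑ k ∈ Finset.Ico 1 n,
        ((k : ZMod p) ^ α * ((n - k : ℕ) : ZMod p) ^ β * ((p - n : ℕ) : ZMod p) ^ γ)⁻¹ =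
      (∑ j ∈ Finset.Icc 1 (max α β),
        (-1) ^ (α + β - j) / ((α + β + γ : ℕ) : ZMod p) *
          (((α + β - j - 1).choose (α - 1) : ZMod p) + (α + β - j - 1).choose (β - 1)) *
          (α + β + γ).choose j) * (bernoulli (p - (α + β + γ)) : ZMod p) := by
  rw [sum_inv_pow_mul_pow_mul_char_sub_pow, sum_inv_pow_mul_sub_pow_mul_pow_eq_sum_choose
    (factorial_ne_zero_of_lt_char p (by omega)) hα hβ, Finset.mul_sum, Finset.sum_mul]
  refine Finset.sum_congr rfl fun j hj => ?_
  have hj := Finset.mem_Icc.1 hj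
  have hsign : (-1 : ZMod p) ^ γ * (-1) ^ (α + β + γ - j) = (-1) ^ (α + β - j) := by
    rw [show α + β + γ - j = γ + (α + β - j) by omega, pow_add, ← mul_assoc,
      pow_mul_pow_eq_one γ (by simp), one_mul]
  rw [doubleHarmonicSum_zmod_eq_bernoulli (by omega) (by omega) (by omega),
    show j + (α + β + γ - j) = α + β + γ by omega, ← hsign]
  ring

end SumsOverThreeParts

theorem stmt_16_general (p : ℕ) [Fact p.Prime] (α β γ : ℕ) (hα : 0 < α) (hβ : 0 < β)
    (hw : p > α + β + γ) :
    (∑ k ∈ (Finset.range (p + 1) ×ˢ Finset.range (p + 1) ×ˢ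
        Finset.range (p + 1)).filter
        (fun k : ℕ × ℕ × ℕ => k.1 + k.2.1 + k.2.2 = p ∧
          0 < k.1 ∧ ¬ p ∣ k.1 ∧ 0 < k.2.1 ∧ ¬ p ∣ k.2.1 ∧ 0 < k.2.2 ∧ ¬ p ∣ k.2.2),
        ((k.1 : ZMod p) ^ α * (k.2.1 : ZMod p) ^ β * (k.2.2 : ZMod p) ^ γ)⁻¹)
      = (((∑ j ∈ Finset.Icc 1 (max α β),
            (-1 : ℚ) ^ (α + β - j) / (α + β + γ) *
              (((α + β - j - 1).choose (α - 1) : ℚ) +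
                ((α + β - j - 1).choose (β - 1) : ℚ)) *
              ((α + β + γ).choose j : ℚ)) *
          bernoulli (p - (α + β + γ)) : ℚ) : ZMod p) := by
  have hw0 : ((α + β + γ : ℕ) : ZMod p) ≠ 0 :=
    natCast_ne_zero_of_factorial_ne_zero (factorial_ne_zero_of_lt_char p hw) (by omega) le_rfl
  have hB : HasResidue (bernoulli (p - (α + β + γ))) (bernoulli (p - (α + β + γ)) : ZMod p) :=
    hasResidue_bernoulli (factorial_ne_zero_of_lt_char p (by omega))
  have key := (HasResidue.sum (s := Finset.Icc 1 (max α β)) fun j _ =>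
    ((((HasResidue.natCast (K := ZMod p) 1).neg.pow (α + β - j)).div_natCast hw0).mul
      ((HasResidue.natCast ((α + β - j - 1).choose (α - 1))).add
        (HasResidue.natCast ((α + β - j - 1).choose (β - 1))))).mul
      (HasResidue.natCast ((α + β + γ).choose j))).mul hB
  rw [sum_filter_add_add_eq
    (fun k => ((k.1 : ZMod p) ^ α * (k.2.1 : ZMod p) ^ β * (k.2.2 : ZMod p) ^ γ)⁻¹),
    sum_inv_pow_mul_pow_mul_pow_zmod hα hβ hw]
  simpa only [Nat.cast_one, Nat.cast_add] using key.cast_eq.symm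

/-- Yang–Cai: for a prime `p ≥ 5` and `α, β, γ ≥ 1` with `w = α+β+γ` odd and
`p > w`, in `ℤ/pℤ`:
`Z_p(α,β,γ) ≡ (∑_{j=1}^{max(α,β)} ((-1)^{α+β-j}/w)(C(α+β-j-1,α-1)+C(α+β-j-1,β-1)) C(w,j)
  + 2(-1)^γ C(α+β,α) δ_{p-1,w}) B_{p-w}`. -/
theorem stmt_16 (p : ℕ) [Fact p.Prime] (hp5 : 5 ≤ p) (α β γ : ℕ)
    (hα : 0 < α) (hβ : 0 < β) (hγ : 0 < γ)
    (hodd : Odd (α + β + γ)) (hw : p > α + β + γ) :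
    (∑ k ∈ (Finset.range (p + 1) ×ˢ Finset.range (p + 1) ×ˢ
        Finset.range (p + 1)).filter
        (fun k : ℕ × ℕ × ℕ => k.1 + k.2.1 + k.2.2 = p ∧
          0 < k.1 ∧ ¬ p ∣ k.1 ∧ 0 < k.2.1 ∧ ¬ p ∣ k.2.1 ∧ 0 < k.2.2 ∧ ¬ p ∣ k.2.2),
        ((k.1 : ZMod p) ^ α * (k.2.1 : ZMod p) ^ β * (k.2.2 : ZMod p) ^ γ)⁻¹)
      = ((((∑ j ∈ Finset.Icc 1 (max α β),
            (-1 : ℚ) ^ (α + β - j) / (α + β + γ) *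
              (((α + β - j - 1).choose (α - 1) : ℚ) +
                ((α + β - j - 1).choose (β - 1) : ℚ)) *
              ((α + β + γ).choose j : ℚ)) +
          2 * (-1 : ℚ) ^ γ * ((α + β).choose α : ℚ) *
            (if p - 1 = α + β + γ then 1 else 0)) *
          bernoulli (p - (α + β + γ)) : ℚ) : ZMod p) := by
  have hδ : p - 1 ≠ α + β + γ := fun h => Nat.not_even_iff_odd.2 hodd
    (h ▸ (Fact.out : p.Prime).even_sub_one (by omega))
  rw [if_neg hδ, mul_zero, add_zero, stmt_16_general p α β γ hα hβ hw]
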